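/- arXiv:2012.01324 — 4 statements merged into one kernel-verified Lean document; each statement's English description precedes it below -/
import Mathlib

section
/- Let L/K be a finite extension of fields of degree d, and let A be a finite-dimensional central simple algebra over K which is split by L, i.e. the base change A ⊗_K L is isomorphic as an L-algebra to a matrix algebra Mat_n(L) for some n ≥ 1. Then the class of A in the Brauer group Br(K) is killed by d; equivalently, the d-fold tensor power A ⊗_K A ⊗_K ⋯ ⊗_K A (d factors) is isomorphic as a K-algebra to a matrix algebra over K. In particular, the kernel of the base-change map Br(K) → Br(L) is killed by d. -/
open scoped TensorProduct PiTensorProduct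

/-!
The module `V = Lⁿ` of `A_L ≅ Mat_n(L)` has dimension `nd` over `K`, and as such is a `K`-form `W`
of the `A_L`-module `V ⊗ L^d`. By Skolem–Noether, an isomorphism `T : V ⊗ L^d ≅ W_L` is unique up
to operators `P ⊗ H`. Let `E : V^{⊗d} → (V ⊗ L^d)^{⊗d}` be the embedding given by the generator
of the line `Λ^d(L^d)`. Both `E` and `Eᵀ` absorb `(P ⊗ H)^{⊗d}` as `det H • P^{⊗d}`, so
`(P ⊗ H)^{⊗d}` commutes with `E * Eᵀ`, and the transport of `E * Eᵀ` by `T` does not depend on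
`T`. Its two pullbacks to each local ring of `L ⊗ L` therefore agree, and by faithfully flat
descent it comes from an operator `s` on `W^{⊗d}` over `K`. The algebra `A^{⊗d}` acts faithfully
on the image of `s`, which has dimension `n^d`. Since `dim A^{⊗d} = (n^d)^2`, this action
identifies `A^{⊗d}` with a matrix algebra over `K`.
-/

namespace BrauerDegree

open Matrix
open scoped Kronecker

section KroneckerPower

variable {R S δ l m n : Type*} [CommRing R] [CommRing S] [Fintype δ]

/-- The Kronecker product of a finite family of matrices of the same shape, as a multilinear map.
Rows and columns of the product are indexed by tuples. -/
def kronPow : MultilinearMap R (fun _ : δ => Matrix m n R) (Matrix (δ → m) (δ → n) R) :=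
  MultilinearMap.pi fun f => MultilinearMap.pi fun g =>
    (MultilinearMap.mkPiAlgebra R δ R).compLinearMap fun i => entryLinearMap R R (f i) (g i)

lemma kronPow_apply (x : δ → Matrix m n R) (f : δ → m) (g : δ → n) :
    kronPow x f g = ∏ i, x i (f i) (g i) := rfl

lemma kronPow_mul [DecidableEq δ] [Fintype m] (x : δ → Matrix l m R) (y : δ → Matrix m n R) :
    kronPow (fun i => x i * y i) = kronPow x * kronPow y := by
  ext f g
  simp only [kronPow_apply, mul_apply, Finset.prod_univ_sum, Fintype.piFinset_univ,
    Finset.prod_mul_distrib]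

lemma kronPow_one [DecidableEq m] [DecidableEq (δ → m)] :
    kronPow (fun _ : δ => (1 : Matrix m m R)) = 1 := by
  ext f g
  simp [kronPow_apply, one_apply, Finset.prod_ite_zero, funext_iff]

lemma kronPow_map (φ : R →+* S) (x : δ → Matrix m n R) :
    (kronPow x).map φ = kronPow fun i => (x i).map φ := by
  ext f g
  simp [kronPow_apply]

lemma kronPow_transpose (x : δ → Matrix m n R) : (kronPow x)ᵀ = kronPow fun i => (x i)ᵀ := rfl

lemma kronPow_mul_kronPow_eq_one [DecidableEq δ] [DecidableEq l] [Fintype m]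
    {x : Matrix l m R} {y : Matrix m l R} (h : x * y = 1) :
    kronPow (fun _ : δ => x) * kronPow (fun _ : δ => y) = 1 := by
  simp only [← kronPow_mul, h, kronPow_one]

lemma exists_linearMap_kronPow_eq_prod [Finite m] [Finite n]
    (ℓ : δ → Matrix m n R →ₗ[R] R) :
    ∃ Λ : Matrix (δ → m) (δ → n) R →ₗ[R] R,
      ∀ x : δ → Matrix m n R, Λ (kronPow x) = ∏ i, ℓ i (x i) := by
  classical
  have := Fintype.ofFinite m
  have := Fintype.ofFinite n
  refine ⟨∑ f : δ → m, ∑ g : δ → n,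
    (∏ i, ℓ i (single (f i) (g i) 1)) • entryLinearMap R R f g, fun x => ?_⟩
  have ℓ_eq_sum (i : δ) :
      ℓ i (x i) = ∑ a : m, ∑ b : n, ℓ i (single a b 1) * x i a b := by
    conv_lhs => rw [matrix_eq_sum_single (x i)]
    simp only [map_sum]
    refine Finset.sum_congr rfl fun a _ => Finset.sum_congr rfl fun b _ => ?_
    rw [mul_comm, ← smul_eq_mul, ← map_smul, smul_single, smul_eq_mul, mul_one]
  simp only [ℓ_eq_sum, Finset.prod_univ_sum, Fintype.piFinset_univ, LinearMap.sum_apply,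
    LinearMap.smul_apply, entryLinearMap_apply, kronPow_apply, smul_eq_mul,
    Finset.prod_mul_distrib]

end KroneckerPower

section TopExteriorPower

variable {R S ι δ : Type*} [CommRing R] [CommRing S] [Fintype δ] [DecidableEq δ]

variable (R) in
/-- The Levi-Civita symbol: the sign of `g` if `g` is a permutation, and `0` otherwise. It is the
coordinate along `g` of the generator of the top exterior power of `R^δ`, embedded in the tensor
power. -/
def leviCivita (g : δ → δ) : R := ((1 : Matrix δ δ R).submatrix g id).det

lemma leviCivita_id : leviCivita R (id : δ → δ) = 1 := by
  rw [leviCivita, submatrix_id_id, det_one]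

lemma map_leviCivita (φ : R →+* S) (g : δ → δ) : φ (leviCivita R g) = leviCivita S g := by
  rw [leviCivita, RingHom.map_det, RingHom.mapMatrix_apply, ← submatrix_map,
    Matrix.map_one φ (map_zero φ) (map_one φ), leviCivita]

lemma sum_prod_mul_leviCivita (H : Matrix δ δ R) (h : δ → δ) :
    ∑ g : δ → δ, (∏ i, H (h i) (g i)) * leviCivita R g = H.det * leviCivita R h := by
  have rows_eq : H.submatrix h id = fun i => ∑ k, H (h i) k • (1 : Matrix δ δ R) k := by
    ext i j
    simp [one_apply, Finset.sum_apply]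
  calc ∑ g : δ → δ, (∏ i, H (h i) (g i)) * leviCivita R g
      = (H.submatrix h id).det := by
        rw [rows_eq]
        change _ = detRowAlternating.toMultilinearMap _
        rw [MultilinearMap.map_sum]
        refine Finset.sum_congr rfl fun g _ => ?_
        rw [MultilinearMap.map_smul_univ]
        rfl
    _ = ((1 : Matrix δ δ R).submatrix h id * H).det := by
        congr 1
        ext i j
        simp [mul_apply, one_apply]
    _ = H.det * leviCivita R h := by rw [det_mul, mul_comm, leviCivita]

variable [DecidableEq ι]

variable (R ι δ) in
/-- The matrix of the embedding of `(R^ι)^{⊗δ}` in `(R^ι ⊗ R^δ)^{⊗δ}` given by tensoring with the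
generator of the top exterior power of `R^δ`. -/
def volumeEmb : Matrix (δ → ι × δ) (δ → ι) R :=
  of fun p f => if (fun i => (p i).1) = f then leviCivita R fun i => (p i).2 else 0

lemma volumeEmb_apply (p : δ → ι × δ) (f : δ → ι) :
    volumeEmb R ι δ p f =
      if (fun i => (p i).1) = f then leviCivita R fun i => (p i).2 else 0 := rfl

lemma volumeEmb_map (φ : R →+* S) : (volumeEmb R ι δ).map φ = volumeEmb S ι δ := by
  ext p f
  simp only [map_apply, volumeEmb_apply, apply_ite φ, map_leviCivita, map_zero]

lemma kronPow_kronecker_mul_volumeEmb [Fintype ι] (Q : δ → Matrix ι ι R) (H : Matrix δ δ R) :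
    kronPow (fun i => Q i ⊗ₖ H) * volumeEmb R ι δ =
      H.det • (volumeEmb R ι δ * kronPow Q) := by
  ext p f
  rw [mul_apply, ← (Equiv.arrowProdEquivProdArrow δ (fun _ => ι) fun _ => δ).symm.sum_comp,
    Fintype.sum_prod_type]
  simp only [volumeEmb_apply, kronPow_apply, Matrix.smul_apply, mul_apply,
    Equiv.arrowProdEquivProdArrow, Equiv.coe_fn_symm_mk, kroneckerMap_apply,
    Finset.prod_mul_distrib, mul_ite, mul_zero, ite_mul, zero_mul, smul_eq_mul,
    Finset.sum_ite_eq, Finset.mem_univ, if_true]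
  rw [Finset.sum_comm]
  simp only [Finset.sum_ite_eq', Finset.mem_univ, if_true, mul_assoc]
  rw [← Finset.mul_sum, sum_prod_mul_leviCivita]
  ring

lemma volumeEmb_transpose_mul_kronPow_kronecker [Fintype ι] (Q : δ → Matrix ι ι R)
    (H : Matrix δ δ R) :
    (volumeEmb R ι δ)ᵀ * kronPow (fun i => Q i ⊗ₖ H) =
      H.det • (kronPow Q * (volumeEmb R ι δ)ᵀ) := by
  simpa [transpose_mul, kronPow_transpose, kroneckerMap_transpose] using
    congrArg transpose (kronPow_kronecker_mul_volumeEmb (fun i => (Q i)ᵀ) Hᵀ)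

/- The left inverse reads off the coordinates along `e_{f i} ⊗ e_i`, so it exists in every
characteristic. -/
lemma exists_mul_volumeEmb_eq_one [Fintype ι] :
    ∃ D : Matrix (δ → ι) (δ → ι × δ) R, D * volumeEmb R ι δ = 1 := by
  refine ⟨(1 : Matrix _ _ R).submatrix (fun f i => (f i, i)) (Equiv.refl _), ?_⟩
  rw [one_submatrix_mul]
  ext f g
  simp [volumeEmb_apply, one_apply, show leviCivita R (fun i : δ => i) = 1 from leviCivita_id]

end TopExteriorPower

section VolumeOperator

variable {R S ι δ : Type*} [CommRing R] [CommRing S] [Fintype ι] [Fintype δ] [DecidableEq ι]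
  [DecidableEq δ]

/-- The operator on `(R^(ι × δ))^{⊗δ}` with image `(R^ι)^{⊗δ} ⊗ Λ^δ(R^δ)`, where `R^ι ⊗ R^δ` is
identified with `R^(ι × δ)` by `T`. Normalizing it to be a projection would require dividing by
the factorial of the cardinality of `δ`. -/
def volumeOperator (T : (Matrix (ι × δ) (ι × δ) R)ˣ) :
    Matrix (δ → ι × δ) (δ → ι × δ) R :=
  (kronPow (fun _ : δ => T.val) * volumeEmb R ι δ) *
    ((volumeEmb R ι δ)ᵀ * kronPow fun _ : δ => T⁻¹.val)

lemma volumeOperator_map (φ : R →+* S) (T : (Matrix (ι × δ) (ι × δ) R)ˣ) :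
    (volumeOperator T).map φ = volumeOperator (Units.map φ.mapMatrix.toMonoidHom T) := by
  simp only [volumeOperator, Matrix.map_mul, kronPow_map, transpose_map, volumeEmb_map φ]
  rfl

lemma commute_kronPow_kronecker_volumeEmb_mul_transpose (P : Matrix ι ι R) (H : Matrix δ δ R) :
    Commute (kronPow fun _ : δ => P ⊗ₖ H) (volumeEmb R ι δ * (volumeEmb R ι δ)ᵀ) := by
  rw [Commute, SemiconjBy, ← Matrix.mul_assoc, kronPow_kronecker_mul_volumeEmb, Matrix.mul_assoc,
    volumeEmb_transpose_mul_kronPow_kronecker, smul_mul, Matrix.mul_smul, Matrix.mul_assoc]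

lemma volumeOperator_mul_of_eq_kronecker {T Z : (Matrix (ι × δ) (ι × δ) R)ˣ} {P : Matrix ι ι R}
    {H : Matrix δ δ R} (hZ : Z.val = P ⊗ₖ H) : volumeOperator (T * Z) = volumeOperator T := by
  have commute_Z := hZ ▸ commute_kronPow_kronecker_volumeEmb_mul_transpose P H
  let E := volumeEmb R ι δ
  calc volumeOperator (T * Z)
      = kronPow (fun _ : δ => T.val) * (kronPow (fun _ : δ => Z.val) * (E * Eᵀ)) *
          kronPow (fun _ : δ => Z⁻¹.val) * kronPow (fun _ : δ => T⁻¹.val) := by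
        simp only [volumeOperator, _root_.mul_inv_rev, Units.val_mul, kronPow_mul,
          Matrix.mul_assoc, E]
    _ = kronPow (fun _ : δ => T.val) * (E * Eᵀ) *
          (kronPow (fun _ : δ => Z.val) * kronPow (fun _ : δ => Z⁻¹.val)) *
            kronPow (fun _ : δ => T⁻¹.val) := by
        rw [commute_Z.eq]
        simp only [Matrix.mul_assoc, E]
    _ = volumeOperator T := by
        rw [kronPow_mul_kronPow_eq_one Z.mul_inv, Matrix.mul_one]
        simp only [volumeOperator, Matrix.mul_assoc, E]

end VolumeOperator

section MatrixModules

open scoped Matrix.Module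

variable {R ι δ κ W : Type*} [CommRing R]

lemma free_and_finite_of_pi [IsLocalRing R] [Nonempty ι] [AddCommGroup W] [Module R W]
    [Module.Free R (ι → W)] [Module.Finite R (ι → W)] : Module.Free R W ∧ Module.Finite R W := by
  classical
  obtain ⟨o⟩ := ‹Nonempty ι›
  have : Module.Projective R W := .of_split (LinearMap.single R (fun _ => W) o)
    (LinearMap.proj o) (LinearMap.proj_comp_single_same R (fun _ => W) o)
  have : Module.Finite R W := .of_surjective (LinearMap.proj o : (ι → W) →ₗ[R] W)
    (Function.surjective_eval o)
  exact ⟨Module.free_of_flat_of_isLocalRing, this⟩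

variable [Fintype ι] [DecidableEq ι]

lemma nonempty_linearEquiv_pi_of_matrix_module [AddCommGroup W] [inst : Module R W]
    [Module (Matrix ι ι R) W] [IsScalarTower R (Matrix ι ι R) W] (i : ι) :
    Nonempty (W ≃ₗ[Matrix ι ι R] (ι → MatrixModCat.toModuleCatObj R W i)) := by
  obtain rfl : inst = Module.compHom W (scalar (α := R) ι) :=
    Module.ext' _ _ fun r w => (algebraMap_smul (Matrix ι ι R) r w).symm
  exact ⟨toModuleCatFromModuleCatLinearEquiv R (ModuleCat.of (Matrix ι ι R) W) i⟩

lemma exists_basis_prod_matrix_smul [IsLocalRing R] [Nonempty ι] [Fintype δ] [AddCommGroup W]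
    [Module R W] [Module.Free R W] [Module.Finite R W] [Module (Matrix ι ι R) W]
    [IsScalarTower R (Matrix ι ι R) W]
    (hW : Module.finrank R W = Fintype.card ι * Fintype.card δ) :
    ∃ b : Module.Basis (ι × δ) R W,
      ∀ (x : Matrix ι ι R) (i : ι) (j : δ), x • b (i, j) = ∑ l, x l i • b (l, j) := by
  obtain ⟨e⟩ := nonempty_linearEquiv_pi_of_matrix_module (R := R) (W := W) (Classical.arbitrary ι)
  let U := MatrixModCat.toModuleCatObj R W (Classical.arbitrary ι)
  let e' : W ≃ₗ[R] (ι → U) := e.restrictScalars R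
  have := Module.Free.of_equiv e'
  have := Module.Finite.equiv e'
  obtain ⟨_, _⟩ := free_and_finite_of_pi (R := R) (ι := ι) (W := U)
  have finrank_U : Module.finrank R U = Fintype.card δ := by
    refine Nat.eq_of_mul_eq_mul_left (Fintype.card_pos (α := ι)) ?_
    rw [← hW, e'.finrank_eq, Module.finrank_pi_fintype, Finset.sum_const, Finset.card_univ,
      smul_eq_mul]
  let bU : Module.Basis δ R U :=
    (Module.finBasisOfFinrankEq R U finrank_U).reindex (Fintype.equivFin δ).symm
  let b := ((Pi.basis fun _ : ι => bU).reindex (Equiv.sigmaEquivProd ι δ)).map e'.symm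
  have e_smul_b (r : R) (i : ι) (j : δ) : e (r • b (i, j)) = Pi.single i (r • bU j) := by
    rw [Pi.single_smul]
    exact (e'.map_smul r _).trans (by simp [b])
  have e_b (i : ι) (j : δ) : e (b (i, j)) = Pi.single i (bU j) := by
    simpa using e_smul_b 1 i j
  refine ⟨b, fun x i j => e.injective ?_⟩
  ext1 l
  rw [map_smul, e_b, map_sum, Finset.sum_apply, Matrix.Module.smul_apply,
    Fintype.sum_eq_single i, Fintype.sum_eq_single l]
  · simp [e_smul_b]
  · intro k hk
    simp [e_smul_b, hk.symm]
  · intro k hk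
    simp [hk]

/- With `δ` a point, this is the Skolem–Noether theorem over a local ring. -/
lemma exists_unit_semiconjBy_kronecker_one [IsLocalRing R] [Nonempty ι] [DecidableEq δ]
    [Fintype κ] [DecidableEq κ] (e : ι × δ ≃ κ) (F : Matrix ι ι R →ₐ[R] Matrix κ κ R) :
    ∃ T : (Matrix κ κ R)ˣ, ∀ x : Matrix ι ι R,
      SemiconjBy T.val (reindex e e (x ⊗ₖ (1 : Matrix δ δ R))) (F x) := by
  have : Fintype δ := .ofInjective (fun j : δ => e (Classical.arbitrary ι, j)) fun _ _ h => by
    simpa using h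
  let : Module (Matrix ι ι R) (κ → R) :=
    Module.compHom (κ → R) ((toLinAlgEquiv' : Matrix κ κ R ≃ₐ[R] _).toRingHom.comp F.toRingHom)
  have smul_eq (x : Matrix ι ι R) (v : κ → R) : x • v = F x *ᵥ v := rfl
  have : IsScalarTower R (Matrix ι ι R) (κ → R) :=
    ⟨fun r x v => by rw [smul_eq, smul_eq, map_smul, smul_mulVec]⟩
  obtain ⟨b, hb⟩ := exists_basis_prod_matrix_smul (R := R) (ι := ι) (δ := δ) (W := κ → R) <| by
    rw [Module.finrank_fintype_fun_eq_card, ← Fintype.card_prod, Fintype.card_congr e]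
  let c := b.reindex e
  let T : (Matrix κ κ R)ˣ := ⟨(Pi.basisFun R κ).toMatrix c, c.toMatrix (Pi.basisFun R κ),
    Module.Basis.toMatrix_mul_toMatrix_flip _ _, Module.Basis.toMatrix_mul_toMatrix_flip _ _⟩
  refine ⟨T, fun x => ?_⟩
  have T_apply (k : κ) (p : ι × δ) : T.val k (e p) = b p k := by
    simp [T, c, Module.Basis.toMatrix_apply]
  ext k q
  obtain ⟨⟨i, j⟩, rfl⟩ := e.surjective q
  calc (T.val * reindex e e (x ⊗ₖ (1 : Matrix δ δ R))) k (e (i, j))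
      = (∑ l, x l i • b (l, j)) k := by
        rw [mul_apply, ← e.sum_comp, Fintype.sum_prod_type]
        simp [T_apply, one_apply, mul_comm]
    _ = (F x *ᵥ b (i, j)) k := by rw [← hb, smul_eq]
    _ = (F x * T.val) k (e (i, j)) := by simp only [mulVec, dotProduct, mul_apply, T_apply]

end MatrixModules

section Splitting

variable {K A : Type*} [CommRing K] [Ring A] [Algebra K A]

lemma exists_algHom_apply_eq_of_isBaseChange {L B C : Type*} [CommRing L] [Algebra K L] [Ring B]
    [Algebra K B] [Algebra L B] [IsScalarTower K L B] [Ring C] [Algebra K C] [Algebra L C]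
    [IsScalarTower K L C] {σ : A →ₐ[K] B} (hσ : IsBaseChange L σ.toLinearMap) (ρ : A →ₐ[K] C) :
    ∃ F : B →ₐ[L] C, ∀ a, F (σ a) = ρ a := by
  let F : B →ₗ[L] C := hσ.lift ρ.toLinearMap
  have F_apply (a : A) : F (σ a) = ρ a := hσ.lift_eq ρ.toLinearMap a
  have map_mul_apply (a : A) (y : B) : F (σ a * y) = F (σ a) * F y := by
    induction y using hσ.inductionOn with
    | zero => simp
    | tmul b => simp [← map_mul, F_apply]
    | smul l y ih => simp [ih]
    | add y z hy hz => simp [mul_add, hy, hz]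
  have map_mul' (x y : B) : F (x * y) = F x * F y := by
    induction x using hσ.inductionOn with
    | zero => simp
    | tmul a => exact map_mul_apply a y
    | smul l x ih => simp [ih]
    | add x z hx hz => simp [add_mul, hx, hz]
  exact ⟨AlgHom.ofLinearMap F (by simpa using F_apply 1) map_mul', F_apply⟩

variable {ι : Type*} [Fintype ι] [DecidableEq ι]

lemma isBaseChange_mapMatrix (L R : Type*) [CommRing L] [CommRing R] [Algebra L R] :
    IsBaseChange R ((Algebra.ofId L R).mapMatrix : Matrix ι ι L →ₐ[L] _).toLinearMap :=
  ((IsBaseChange.linearMap L R).finitePow ι).finitePow ι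

lemma isBaseChange_mapMatrix_comp {L R : Type*} [CommRing L] [Algebra K L] [CommRing R]
    [Algebra K R] {σ : A →ₐ[K] Matrix ι ι L} (hσ : IsBaseChange L σ.toLinearMap)
    (φ : L →ₐ[K] R) : IsBaseChange R (φ.mapMatrix.comp σ).toLinearMap := by
  let := φ.toRingHom.toAlgebra
  have : IsScalarTower K L R := .of_algHom φ
  have isBaseChange_comp := hσ.comp (isBaseChange_mapMatrix L R)
  exact isBaseChange_comp

variable {R δ : Type*} [CommRing R] [Algebra K R] [Nonempty ι] [DecidableEq δ]

lemma exists_unit_semiconjBy_of_isBaseChange [IsLocalRing R] {κ : Type*} [Fintype κ]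
    [DecidableEq κ] (e : ι × δ ≃ κ) {σ : A →ₐ[K] Matrix ι ι R}
    (hσ : IsBaseChange R σ.toLinearMap) (ρ : A →ₐ[K] Matrix κ κ R) :
    ∃ T : (Matrix κ κ R)ˣ, ∀ a,
      SemiconjBy T.val (reindex e e (σ a ⊗ₖ (1 : Matrix δ δ R))) (ρ a) := by
  obtain ⟨F, hF⟩ := exists_algHom_apply_eq_of_isBaseChange hσ ρ
  obtain ⟨T, hT⟩ := exists_unit_semiconjBy_kronecker_one e F
  exact ⟨T, fun a => hF a ▸ hT (σ a)⟩

variable [Fintype δ]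

lemma exists_eq_one_kronecker_of_commute {G : Matrix (ι × δ) (ι × δ) R}
    (hG : ∀ x : Matrix ι ι R, Commute G (x ⊗ₖ 1)) :
    ∃ H : Matrix δ δ R, G = (1 : Matrix ι ι R) ⊗ₖ H := by
  obtain ⟨o⟩ := ‹Nonempty ι›
  refine ⟨of fun j l => G (o, j) (o, l), ?_⟩
  ext ⟨i, j⟩ ⟨k, l⟩
  simpa [mul_apply, Fintype.sum_prod_type, single_apply, one_apply, ite_and] using
    congrFun₂ (hG (single o i 1)).eq.symm (o, j) (k, l)

lemma exists_eq_one_kronecker_of_commute_of_isBaseChange {σ : A →ₐ[K] Matrix ι ι R}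
    (hσ : IsBaseChange R σ.toLinearMap) {G : Matrix (ι × δ) (ι × δ) R}
    (hG : ∀ a, Commute G (σ a ⊗ₖ 1)) : ∃ H : Matrix δ δ R, G = (1 : Matrix ι ι R) ⊗ₖ H := by
  refine exists_eq_one_kronecker_of_commute fun x => ?_
  induction x using hσ.inductionOn with
  | zero => simp
  | tmul a => exact hG a
  | smul r x ih => rw [smul_kronecker]; exact ih.smul_right r
  | add x y hx hy => rw [add_kronecker]; exact hx.add_right hy

lemma volumeOperator_eq_of_semiconjBy [IsLocalRing R] {σ₁ σ₂ : A →ₐ[K] Matrix ι ι R}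
    (hσ₂ : IsBaseChange R σ₂.toLinearMap)
    {ρ : A →ₐ[K] Matrix (ι × δ) (ι × δ) R} {T₁ T₂ : (Matrix (ι × δ) (ι × δ) R)ˣ}
    (hT₁ : ∀ a, SemiconjBy T₁.val (σ₁ a ⊗ₖ 1) (ρ a))
    (hT₂ : ∀ a, SemiconjBy T₂.val (σ₂ a ⊗ₖ 1) (ρ a)) :
    volumeOperator T₁ = volumeOperator T₂ := by
  obtain ⟨P, hP⟩ := exists_unit_semiconjBy_of_isBaseChange (Equiv.prodUnique ι Unit) hσ₂ σ₁
  have hP' (a : A) : SemiconjBy (P.val ⊗ₖ (1 : Matrix δ δ R)) (σ₂ a ⊗ₖ 1) (σ₁ a ⊗ₖ 1) := by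
    have reindex_eq : reindex (Equiv.prodUnique ι Unit) (Equiv.prodUnique ι Unit)
        (σ₂ a ⊗ₖ (1 : Matrix Unit Unit R)) = σ₂ a := by
      ext i j
      simp
    have := (hP a).eq
    rw [reindex_eq] at this
    rw [SemiconjBy, ← mul_kronecker_mul, ← mul_kronecker_mul, this]
  obtain ⟨H, hH⟩ := exists_eq_one_kronecker_of_commute_of_isBaseChange hσ₂
    (G := (T₂⁻¹ * T₁).val * (P.val ⊗ₖ 1)) fun a =>
      ((hT₂ a).units_inv_symm_left.mul_left (hT₁ a)).mul_left (hP' a)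
  have transition_eq : (T₂⁻¹ * T₁).val = P⁻¹.val ⊗ₖ H := by
    calc (T₂⁻¹ * T₁).val
        = (T₂⁻¹ * T₁).val * (P.val ⊗ₖ 1) * (P⁻¹.val ⊗ₖ 1) := by
          rw [Matrix.mul_assoc, ← mul_kronecker_mul, P.mul_inv, Matrix.mul_one,
            one_kronecker_one, Matrix.mul_one]
      _ = P⁻¹.val ⊗ₖ H := by
          rw [hH, ← mul_kronecker_mul, Matrix.one_mul, Matrix.mul_one]
  rw [← volumeOperator_mul_of_eq_kronecker (T := T₂) transition_eq, mul_inv_cancel_left]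

lemma volumeOperator_map_eq_map [IsLocalRing R] {L : Type*} [CommRing L] [Algebra K L]
    {σ : A →ₐ[K] Matrix ι ι L} (hσ : IsBaseChange L σ.toLinearMap)
    {ρ : A →ₐ[K] Matrix (ι × δ) (ι × δ) K} {T : (Matrix (ι × δ) (ι × δ) L)ˣ}
    (hT : ∀ a, SemiconjBy T.val (σ a ⊗ₖ 1) ((ρ a).map (algebraMap K L))) (φ ψ : L →ₐ[K] R) :
    (volumeOperator T).map φ = (volumeOperator T).map ψ := by
  have hT_map (χ : L →ₐ[K] R) (a : A) :
      SemiconjBy (Units.map χ.toRingHom.mapMatrix.toMonoidHom T).val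
        (χ.mapMatrix.comp σ a ⊗ₖ (1 : Matrix δ δ R))
        ((Algebra.ofId K R).mapMatrix.comp ρ a) := by
    refine (congrArg₂ (SemiconjBy _) ?_ ?_).mpr ((hT a).map χ.mapMatrix)
    · ext ⟨i, j⟩ ⟨k, l⟩
      simp [one_apply, apply_ite χ]
    · ext i j
      simp [Algebra.ofId_apply]
  calc (volumeOperator T).map φ = volumeOperator _ := volumeOperator_map φ.toRingHom T
    _ = volumeOperator _ := volumeOperator_eq_of_semiconjBy (isBaseChange_mapMatrix_comp hσ ψ)
      (hT_map φ) (hT_map ψ)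
    _ = (volumeOperator T).map ψ := (volumeOperator_map ψ.toRingHom T).symm

end Splitting

section Descent

universe v

variable {K : Type*} {L : Type v} [CommRing K] [CommRing L] [Algebra K L]
  [Module.FaithfullyFlat K L]

/- Faithful flatness identifies `K` with the set of `l` such that `l ⊗ 1 = 1 ⊗ l`, and this
equality can be checked in the local rings of `L ⊗ L`. -/
lemma mem_range_algebraMap_of_forall_algHom_eq {l : L}
    (hl : ∀ (R : Type v) [CommRing R] [Algebra K R] [IsLocalRing R] (φ ψ : L →ₐ[K] R),
      φ l = ψ l) : l ∈ Set.range (algebraMap K L) := by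
  rw [← Algebra.IsEffective.eqLocus_includeLeft_includeRight
    (Algebra.IsEffective.of_faithfullyFlat K L)]
  change l ⊗ₜ[K] (1 : L) = 1 ⊗ₜ[K] l
  rw [← sub_eq_zero]
  refine eq_zero_of_localization _ fun J _ => ?_
  rw [map_sub, sub_eq_zero]
  let toLocal := IsScalarTower.toAlgHom K (L ⊗[K] L) (Localization.AtPrime J)
  exact hl (Localization.AtPrime J) (toLocal.comp Algebra.TensorProduct.includeLeft)
    (toLocal.comp Algebra.TensorProduct.includeRight)

lemma exists_matrix_map_eq_of_forall_algHom_eq {m n : Type*} {M : Matrix m n L}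
    (hM : ∀ (R : Type v) [CommRing R] [Algebra K R] [IsLocalRing R] (φ ψ : L →ₐ[K] R),
      M.map φ = M.map ψ) : ∃ s : Matrix m n K, s.map (algebraMap K L) = M := by
  choose s hs using fun i j => mem_range_algebraMap_of_forall_algHom_eq (K := K) (l := M i j)
    fun R _ _ _ φ ψ => congrFun₂ (hM R φ ψ) i j
  exact ⟨of s, by ext i j; exact hs i j⟩

end Descent

section TensorPower

lemma finrank_tensorPow {K A δ : Type*} [CommRing K] [Nontrivial K] [AddCommGroup A] [Module K A]
    [Module.Free K A] [Fintype δ] :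
    Module.finrank K (⨂[K] _ : δ, A) = Module.finrank K A ^ Fintype.card δ := by
  rw [Module.finrank_eq_nat_card_basis (Module.Free.chooseBasis K A),
    Module.finrank_eq_nat_card_basis
      (Basis.piTensorProduct fun _ : δ => Module.Free.chooseBasis K A), Nat.card_fun,
    Nat.card_eq_fintype_card (α := δ)]

variable {K A R δ m n : Type*} [CommRing K] [Ring A] [Algebra K A] [CommRing R] [Algebra K R]
  [Fintype δ] [DecidableEq δ] [Fintype m] [DecidableEq m] [Fintype n] [DecidableEq n]

variable (δ) in
/-- The tensor power of a matrix representation of `A`, as a representation of the tensor power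
of `A`. -/
noncomputable def tensorPowRep (ρ : A →ₐ[K] Matrix m m R) :
    (⨂[K] _ : δ, A) →ₐ[K] Matrix (δ → m) (δ → m) R :=
  PiTensorProduct.liftAlgHom
    ((kronPow.restrictScalars K).compLinearMap fun _ : δ => ρ.toLinearMap)
    (by simp [kronPow_one]) (fun a b => by simp [kronPow_mul])

lemma tensorPowRep_tprod (ρ : A →ₐ[K] Matrix m m R) (a : δ → A) :
    tensorPowRep δ ρ (⨂ₜ[K] i, a i) = kronPow fun i => ρ (a i) :=
  PiTensorProduct.lift.tprod _

lemma tensorPowRep_map_algebraMap (ρ : A →ₐ[K] Matrix m m K) (c : ⨂[K] _ : δ, A) :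
    (tensorPowRep δ ρ c).map (algebraMap K R) =
      tensorPowRep δ ((Algebra.ofId K R).mapMatrix.comp ρ) c := by
  suffices h : ((Algebra.ofId K R).mapMatrix.comp (tensorPowRep δ ρ)).toLinearMap =
      (tensorPowRep δ ((Algebra.ofId K R).mapMatrix.comp ρ)).toLinearMap from
    LinearMap.congr_fun h c
  ext a : 2
  simp only [LinearMap.compMultilinearMap_apply, AlgHom.toLinearMap_apply, AlgHom.comp_apply,
    tensorPowRep_tprod]
  exact kronPow_map (algebraMap K R) fun i => ρ (a i)

lemma tensorPowRep_mul_eq_mul_tensorPowRep {ρ₁ : A →ₐ[K] Matrix m m R}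
    {ρ₂ : A →ₐ[K] Matrix n n R} {X : Matrix (δ → m) (δ → n) R}
    (hX : ∀ a : δ → A, kronPow (fun i => ρ₁ (a i)) * X = X * kronPow fun i => ρ₂ (a i))
    (c : ⨂[K] _ : δ, A) : tensorPowRep δ ρ₁ c * X = X * tensorPowRep δ ρ₂ c := by
  induction c using PiTensorProduct.induction_on with
  | smul_tprod r a =>
    simp only [map_smul, tensorPowRep_tprod, Matrix.smul_mul, Matrix.mul_smul, hX]
  | add x y hx hy => simp only [map_add, Matrix.add_mul, Matrix.mul_add, hx, hy]

section Intertwining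

variable {ι : Type*} [Fintype ι] [DecidableEq ι] {σ : A →ₐ[K] Matrix ι ι R}
  {ρ : A →ₐ[K] Matrix (ι × δ) (ι × δ) R} {T : (Matrix (ι × δ) (ι × δ) R)ˣ}

lemma tensorPowRep_mul_kronPow_mul_volumeEmb (hT : ∀ a, SemiconjBy T.val (σ a ⊗ₖ 1) (ρ a))
    (c : ⨂[K] _ : δ, A) :
    tensorPowRep δ ρ c * (kronPow (fun _ : δ => T.val) * volumeEmb R ι δ) =
      kronPow (fun _ : δ => T.val) * volumeEmb R ι δ * tensorPowRep δ σ c := by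
  refine tensorPowRep_mul_eq_mul_tensorPowRep (fun a => ?_) c
  simp only [← Matrix.mul_assoc, ← kronPow_mul, ← (hT _).eq]
  rw [kronPow_mul, Matrix.mul_assoc, kronPow_kronecker_mul_volumeEmb, det_one, one_smul,
    Matrix.mul_assoc]

lemma volumeEmb_transpose_mul_kronPow_mul_tensorPowRep
    (hT : ∀ a, SemiconjBy T.val (σ a ⊗ₖ 1) (ρ a)) (c : ⨂[K] _ : δ, A) :
    (volumeEmb R ι δ)ᵀ * kronPow (fun _ : δ => T⁻¹.val) * tensorPowRep δ ρ c =
      tensorPowRep δ σ c * ((volumeEmb R ι δ)ᵀ * kronPow fun _ : δ => T⁻¹.val) := by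
  refine (tensorPowRep_mul_eq_mul_tensorPowRep (fun a => ?_) c).symm
  simp only [Matrix.mul_assoc, ← kronPow_mul, (hT _).units_inv_symm_left.eq]
  rw [kronPow_mul, ← Matrix.mul_assoc, ← Matrix.mul_assoc,
    volumeEmb_transpose_mul_kronPow_kronecker, det_one, one_smul]

end Intertwining

lemma tensorPowRep_injective_of_isBaseChange [FaithfulSMul K R] [Module.Free K A]
    {σ : A →ₐ[K] Matrix m m R} (hσ : IsBaseChange R σ.toLinearMap) :
    Function.Injective (tensorPowRep δ σ) := by
  let b := Module.Free.chooseBasis K A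
  let bPow := Basis.piTensorProduct fun _ : δ => b
  refine (injective_iff_map_eq_zero _).mpr fun c hc => bPow.ext_elem fun J => ?_
  obtain ⟨Λ, hΛ⟩ := exists_linearMap_kronPow_eq_prod fun i => (hσ.basis b).coord (J i)
  have coord_eq (c : ⨂[K] _ : δ, A) :
      Λ (tensorPowRep δ σ c) = algebraMap K R (bPow.repr c J) := by
    induction c using PiTensorProduct.induction_on with
    | smul_tprod r a =>
      have coord_apply (i : δ) := hσ.basis_repr_comp_apply b (a i) (J i)
      simp only [AlgHom.toLinearMap_apply] at coord_apply
      have Λ_smul (x : Matrix (δ → m) (δ → m) R) : Λ (r • x) = r • Λ x :=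
        (Λ.restrictScalars K).map_smul r x
      simp [tensorPowRep_tprod, Λ_smul, hΛ, coord_apply, bPow,
        Basis.piTensorProduct_repr_tprod_apply, Algebra.smul_def r (∏ _, _)]
    | add x y hx hy => simp [hx, hy]
  apply FaithfulSMul.algebraMap_injective K R
  rw [← coord_eq, hc, map_zero, map_zero, Finsupp.zero_apply, map_zero]

end TensorPower

section Cutting

lemma rank_le_rank_map {K L m : Type*} [Field K] [Field L] [Fintype m] (φ : K →+* L)
    (s : Matrix m m K) : s.rank ≤ (s.map φ).rank := by
  classical
  obtain ⟨V, U, e, -, -, normal_form⟩ := s.exists_rank_normal_form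
  let block := fun i : Fin s.rank => e.symm (.inl i)
  have block_eq : (V.map φ * s.map φ * U.map φ).submatrix block block = 1 := by
    rw [← Matrix.map_mul, ← Matrix.map_mul, normal_form]
    ext i j
    simp [block, one_apply, apply_ite φ]
  calc s.rank = (1 : Matrix (Fin s.rank) (Fin s.rank) L).rank := by simp
    _ ≤ (V.map φ * s.map φ * U.map φ).rank := block_eq ▸ rank_submatrix_le _ _ _
    _ ≤ (V.map φ * s.map φ).rank := rank_mul_le_left _ _
    _ ≤ (s.map φ).rank := rank_mul_le_right _ _

variable {K C p : Type*} [Field K] [Ring C] [Algebra K C] [Fintype p] [DecidableEq p]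

lemma nonempty_algEquiv_matrix_of_injective {M : Type*} [AddCommGroup M] [Module K M]
    [Module.Finite K M] {Φ : C →ₐ[K] Module.End K M} (hΦ : Function.Injective Φ)
    (hC : Module.finrank K C = Fintype.card p ^ 2) (hM : Module.finrank K M ≤ Fintype.card p) :
    Nonempty (C ≃ₐ[K] Matrix p p K) := by
  have finrank_le : Module.finrank K C ≤ Module.finrank K M ^ 2 := by
    simpa [Module.finrank_linearMap, sq] using Φ.toLinearMap.finrank_le_finrank_of_injective hΦ
  have finrank_M : Module.finrank K M = Fintype.card p :=
    hM.antisymm ((Nat.pow_le_pow_iff_left two_ne_zero).mp (hC ▸ finrank_le))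
  have finrank_eq : Module.finrank K C = Module.finrank K (Module.End K M) := by
    rw [hC, Module.finrank_linearMap, finrank_M, sq]
  have := Module.Finite.of_injective Φ.toLinearMap hΦ
  have Φ_surjective : Function.Surjective Φ :=
    (LinearMap.injective_iff_surjective_of_finrank_eq_finrank finrank_eq
      (f := Φ.toLinearMap)).mp hΦ
  let b := (Module.finBasisOfFinrankEq K M finrank_M).reindex (Fintype.equivFin p).symm
  exact ⟨(AlgEquiv.ofBijective Φ ⟨hΦ, Φ_surjective⟩).trans (algEquivMatrix b)⟩

variable {m : Type*} [Fintype m] [DecidableEq m]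

lemma nonempty_algEquiv_matrix_of_commute {ρ : C →ₐ[K] Matrix m m K} {s : Matrix m m K}
    (hs : ∀ c, Commute (ρ c) s) (hρ : ∀ c, ρ c * s = 0 → c = 0)
    (hC : Module.finrank K C = Fintype.card p ^ 2) (hrank : s.rank ≤ Fintype.card p) :
    Nonempty (C ≃ₐ[K] Matrix p p K) := by
  let M := LinearMap.range s.mulVecLin
  have mulVec_mem (c : C) : ∀ v ∈ M, (ρ c).mulVecLin v ∈ M := by
    rintro _ ⟨w, rfl⟩
    exact ⟨ρ c *ᵥ w, by simp only [mulVecLin_apply, mulVec_mulVec, (hs c).eq]⟩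
  let Φ : C →ₐ[K] Module.End K M := AlgHom.ofLinearMap
    { toFun := fun c => (ρ c).mulVecLin.restrict (mulVec_mem c)
      map_add' := fun c c' => by ext; simp
      map_smul' := fun r c => by ext; simp }
    (by ext; simp) (fun c c' => by ext; simp)
  have Φ_apply (c : C) (w : m → K) : (Φ c ⟨s *ᵥ w, w, rfl⟩).val = (ρ c * s) *ᵥ w :=
    mulVec_mulVec w (ρ c) s
  have Φ_injective : Function.Injective Φ := by
    refine (injective_iff_map_eq_zero Φ).mpr fun c hc => hρ c (mulVec_injective ?_)
    ext1 w
    rw [← Φ_apply, hc, zero_mulVec]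
    rfl
  exact nonempty_algEquiv_matrix_of_injective Φ_injective hC hrank

lemma nonempty_algEquiv_matrix_of_intertwining {L : Type*} [Field L] [Algebra K L]
    {ρ : C →ₐ[K] Matrix m m K} {σ : C →ₐ[K] Matrix p p L} (hσ : Function.Injective σ)
    (hC : Module.finrank K C = Fintype.card p ^ 2) {s : Matrix m m K}
    {X X' : Matrix m p L} {Y Y' : Matrix p m L} (hs : s.map (algebraMap K L) = X * Y)
    (hX : ∀ c, (ρ c).map (algebraMap K L) * X = X * σ c)
    (hY : ∀ c, Y * (ρ c).map (algebraMap K L) = σ c * Y)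
    (hYX : Y' * X = 1) (hYX' : Y * X' = 1) :
    Nonempty (C ≃ₐ[K] Matrix p p K) := by
  have map_injective := Matrix.map_injective (m := m) (n := m) (algebraMap K L).injective
  have map_mul_s (c : C) : (ρ c * s).map (algebraMap K L) = X * σ c * Y := by
    rw [Matrix.map_mul, hs, ← Matrix.mul_assoc, hX]
  refine nonempty_algEquiv_matrix_of_commute (ρ := ρ) (s := s) (fun c => map_injective ?_)
    (fun c hc => ?_) hC ?_
  · simp only [map_mul_s, Matrix.map_mul, hs, Matrix.mul_assoc, hY]
  · have X_mul_mul_Y : X * σ c * Y = 0 := by simp [← map_mul_s, hc]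
    refine (map_eq_zero_iff σ hσ).mp ?_
    calc σ c = Y' * X * σ c * (Y * X') := by rw [hYX, hYX', Matrix.one_mul, Matrix.mul_one]
      _ = Y' * (X * σ c * Y) * X' := by simp only [Matrix.mul_assoc]
      _ = 0 := by rw [X_mul_mul_Y, Matrix.mul_zero, Matrix.zero_mul]
  · calc s.rank ≤ (X * Y).rank := hs ▸ rank_le_rank_map (algebraMap K L) s
      _ ≤ X.rank := rank_mul_le_left X Y
      _ ≤ Fintype.card p := X.rank_le_card_width

end Cutting

section TensorPowerSplitting

variable {K L A ι δ : Type*} [Field K] [Field L] [Algebra K L] [Ring A] [Algebra K A]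
  [Fintype ι] [DecidableEq ι]

lemma finrank_eq_card_sq_of_isBaseChange {σ : A →ₐ[K] Matrix ι ι L}
    (hσ : IsBaseChange L σ.toLinearMap) : Module.finrank K A = Fintype.card ι ^ 2 := by
  rw [← Module.finrank_baseChange (R := L), hσ.equiv.finrank_eq, Module.finrank_matrix,
    Module.finrank_self, mul_one, sq]

theorem nonempty_tensorPow_algEquiv_matrix_of_algHom [Nonempty ι] [Fintype δ] [DecidableEq δ]
    {σ : A →ₐ[K] Matrix ι ι L} (hσ : IsBaseChange L σ.toLinearMap)
    (ρ : A →ₐ[K] Matrix (ι × δ) (ι × δ) K) :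
    Nonempty ((⨂[K] _ : δ, A) ≃ₐ[K] Matrix (δ → ι) (δ → ι) K) := by
  obtain ⟨T, hT⟩ := exists_unit_semiconjBy_of_isBaseChange (Equiv.refl (ι × δ)) hσ
    ((Algebra.ofId K L).mapMatrix.comp ρ)
  obtain ⟨s, hs⟩ := exists_matrix_map_eq_of_forall_algHom_eq
    fun R _ _ _ φ ψ => volumeOperator_map_eq_map (R := R) (ρ := ρ) hσ hT φ ψ
  obtain ⟨D, hD⟩ := exists_mul_volumeEmb_eq_one (R := L) (ι := ι) (δ := δ)
  have kronPow_T := kronPow_mul_kronPow_eq_one (δ := δ) T.inv_mul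
  refine nonempty_algEquiv_matrix_of_intertwining (ρ := tensorPowRep δ ρ)
    (tensorPowRep_injective_of_isBaseChange hσ) ?_ hs (fun c => ?_) (fun c => ?_)
    (Y' := D * kronPow fun _ : δ => T⁻¹.val) (X' := kronPow (fun _ : δ => T.val) * Dᵀ) ?_ ?_
  · rw [finrank_tensorPow, finrank_eq_card_sq_of_isBaseChange hσ, Fintype.card_fun, ← pow_mul,
      ← pow_mul, mul_comm]
  · rw [tensorPowRep_map_algebraMap, tensorPowRep_mul_kronPow_mul_volumeEmb hT]
  · rw [tensorPowRep_map_algebraMap, volumeEmb_transpose_mul_kronPow_mul_tensorPowRep hT]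
  · rw [Matrix.mul_assoc, ← Matrix.mul_assoc (kronPow _), kronPow_T, Matrix.one_mul, hD]
  · rw [Matrix.mul_assoc, ← Matrix.mul_assoc (kronPow _), kronPow_T, Matrix.one_mul,
      ← transpose_mul, hD, transpose_one]

end TensorPowerSplitting

end BrauerDegree

/-- Let `L/K` be a finite extension of fields of degree `d`, and let `A` be a
finite-dimensional central simple `K`-algebra split by `L`, i.e. `L ⊗[K] A` is isomorphic as an
`L`-algebra to a matrix algebra `Mat_n(L)` for some `n ≥ 1`.  Then the class of `A` in `Br(K)`
is killed by `d`: the `d`-fold tensor power `A ⊗[K] ⋯ ⊗[K] A` is isomorphic as a `K`-algebra to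
a matrix algebra over `K`. -/
theorem brauer_class_killed_by_degree_of_split
    (K L : Type*) [Field K] [Field L] [Algebra K L] [FiniteDimensional K L]
    (d : ℕ) (hd : d = Module.finrank K L)
    (A : Type*) [Ring A] [Algebra K A] [FiniteDimensional K A]
    [Algebra.IsCentral K A] [IsSimpleRing A]
    (hsplit : ∃ n : ℕ, 0 < n ∧ Nonempty ((L ⊗[K] A) ≃ₐ[L] Matrix (Fin n) (Fin n) L)) :
    ∃ m : ℕ, 0 < m ∧
      Nonempty ((⨂[K] _i : Fin d, A) ≃ₐ[K] Matrix (Fin m) (Fin m) K) := by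
  obtain ⟨n, hn, ⟨θ⟩⟩ := hsplit
  have : Nonempty (Fin n) := ⟨⟨0, hn⟩⟩
  let σ : A →ₐ[K] Matrix (Fin n) (Fin n) L :=
    (θ.toAlgHom.restrictScalars K).comp Algebra.TensorProduct.includeRight
  have hσ : IsBaseChange L σ.toLinearMap := .of_equiv θ.toLinearEquiv fun _ => rfl
  let actionOnColumns : Matrix (Fin n) (Fin n) L →ₐ[K] Matrix (Fin n × Fin d) (Fin n × Fin d) K :=
    (Matrix.compAlgEquiv (Fin n) (Fin d) K K).toAlgHom.comp
      (Algebra.leftMulMatrix (Module.finBasisOfFinrankEq K L hd.symm)).mapMatrix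
  obtain ⟨Θ⟩ :=
    BrauerDegree.nonempty_tensorPow_algEquiv_matrix_of_algHom hσ (actionOnColumns.comp σ)
  exact ⟨Fintype.card (Fin d → Fin n), Fintype.card_pos,
    ⟨Θ.trans (Matrix.reindexAlgEquiv K K (Fintype.equivFin (Fin d → Fin n)))⟩⟩
end

section
/- Let K be a field of characteristic p ≥ 0 that is finitely generated over its prime subfield, and let ℓ ≠ p be a prime number. Then the cardinalities of the groups Hom_{G_K}(μ_{ℓ^n}, ℤ/ℓ^n ℤ) of G_K-equivariant group homomorphisms from μ_{ℓ^n} to ℤ/ℓ^n ℤ are bounded independently of n; that is, there is a constant C (depending on K and ℓ) such that for every n ≥ 1 the group Hom_{G_K}(μ_{ℓ^n}, ℤ/ℓ^n ℤ) has at most C elements. -/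
/-!
A field `K` that is finitely generated over its prime field `F` contains only finitely many roots
of unity: they lie in the algebraic closure of `F` in `K`, which is linearly disjoint from `F(x)`
for a transcendence basis `x` of `K / F` and hence has degree at most `[K : F(x)] < ∞` over `F`.
It is thus a finite field or a number field.

Let `f` be an equivariant homomorphism on `μ_m` and let `r` be the order of `f ζ`. If `σ` acts on
`μ_m` as `ζ ↦ ζ ^ a`, then `f ζ ^ a = f ζ`, so `a ≡ 1` modulo `r` and `σ` fixes `μ_r ⊆ μ_m`. By
Galois theory `μ_r ⊆ K`, so `r` divides the number `w` of roots of unity in `K`. As `μ_m` is cyclic,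
`f` is determined by its value on a generator, which is one of the at most `w` elements of
`w`-torsion in the cyclic target.
-/

section AlgebraicClosure

variable {F K ι : Type*} [Field F] [Field K] [Algebra F K] {x : ι → K}

theorem linearDisjoint_algebraAdjoin_of_algebraicIndependent (hx : AlgebraicIndependent F x)
    (L : IntermediateField F K) [Algebra.IsAlgebraic F L] :
    L.toSubalgebra.LinearDisjoint (Algebra.adjoin F (Set.range x)) := by
  have hxL : AlgebraicIndependent L x := hx.extendScalars L
  refine .of_basis_right _ _ ((MvPolynomial.basisMonomials ι F).map hx.aevalEquiv.toLinearEquiv) ?_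
  have monomials_indep := (MvPolynomial.basisMonomials ι L).linearIndependent.map'
    (MvPolynomial.aeval x).toLinearMap (LinearMap.ker_eq_bot.2 hxL)
  convert! monomials_indep using 1
  ext m
  simp [MvPolynomial.aeval_monomial]

open scoped IntermediateField.algebraAdjoinAdjoin in
theorem linearDisjoint_adjoin_of_algebraicIndependent (hx : AlgebraicIndependent F x)
    (L : IntermediateField F K) [Algebra.IsAlgebraic F L] :
    L.LinearDisjoint (IntermediateField.adjoin F (Set.range x)) := by
  refine .of_basis_left (Module.Basis.ofVectorSpace F L) ?_
  rw [← LinearIndependent.iff_fractionRing (Algebra.adjoin F (Set.range x))]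
  exact (linearDisjoint_algebraAdjoin_of_algebraicIndependent hx L).linearIndependent_left_of_flat
    (Module.Basis.ofVectorSpace F L).linearIndependent

variable (F K) in
theorem finiteDimensional_algebraicClosure [Algebra.EssFiniteType F K] :
    FiniteDimensional F (algebraicClosure F K) := by
  obtain ⟨s, hs⟩ := exists_isTranscendenceBasis F K
  let E := IntermediateField.adjoin F (Set.range ((↑) : s → K))
  have : Algebra.IsAlgebraic E K := hs.isAlgebraic_field
  have : Algebra.EssFiniteType E K := .of_comp F E K
  have : FiniteDimensional E K := Algebra.finite_of_essFiniteType_of_isAlgebraic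
  let b := Module.Basis.ofVectorSpace F (algebraicClosure F K)
  have b_indep := (linearDisjoint_adjoin_of_algebraicIndependent hs.1
    (algebraicClosure F K)).linearIndependent_left b.linearIndependent
  have := b_indep.finite
  exact .of_basis b

end AlgebraicClosure

theorem essFiniteType_of_field_fg (F K : Type*) [Field F] [Field K] [Algebra F K] [Field.FG K] :
    Algebra.EssFiniteType F K := by
  obtain ⟨S, hS⟩ := Field.FG.finitely_generated (L := K)
  refine IntermediateField.fg_top_iff.1 ⟨S, top_le_iff.1 fun y _ ↦ ?_⟩
  have closure_le :
      Subfield.closure (S : Set K) ≤ (IntermediateField.adjoin F (S : Set K)).toSubfield :=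
    Subfield.closure_le.2 (IntermediateField.subset_adjoin F _)
  exact closure_le (hS ▸ Subfield.mem_top y)

theorem isIntegral_of_isOfFinOrder (R : Type*) {A : Type*} [CommRing R] [Ring A] [Algebra R A]
    {z : A} (hz : IsOfFinOrder z) : IsIntegral R z := by
  obtain ⟨n, hn, hzn⟩ := isOfFinOrder_iff_pow_eq_one.1 hz
  exact .of_pow hn (hzn ▸ isIntegral_one)

theorem finite_setOf_isOfFinOrder_of_numberField (L : Type*) [Field L] [NumberField L] :
    {z : L | IsOfFinOrder z}.Finite :=
  (NumberField.Embeddings.finite_of_norm_le L ℂ 1).subset fun _ hz ↦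
    ⟨isIntegral_of_isOfFinOrder ℤ hz, fun φ ↦ (φ.toMonoidHom.isOfFinOrder hz).norm_eq_one.le⟩

theorem finite_setOf_isOfFinOrder_of_algebraicClosure (F K : Type*) [Field F] [Field K]
    [Algebra F K] (h : {z : algebraicClosure F K | IsOfFinOrder z}.Finite) :
    {z : K | IsOfFinOrder z}.Finite := by
  refine (h.image (algebraMap (algebraicClosure F K) K)).subset fun z hz ↦ ?_
  let y : algebraicClosure F K :=
    ⟨z, mem_algebraicClosure_iff'.2 (isIntegral_of_isOfFinOrder F hz)⟩
  exact ⟨y, Submonoid.isOfFinOrder_coe.1 hz, rfl⟩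

theorem finite_setOf_isOfFinOrder (K : Type*) [Field K] [Field.FG K] :
    {z : K | IsOfFinOrder z}.Finite := by
  obtain _ | ⟨p, _, _⟩ := CharP.exists' K
  · have := essFiniteType_of_field_fg ℚ K
    have := finiteDimensional_algebraicClosure ℚ K
    have : NumberField (algebraicClosure ℚ K) := ⟨⟩
    exact finite_setOf_isOfFinOrder_of_algebraicClosure ℚ K
      (finite_setOf_isOfFinOrder_of_numberField _)
  · let := ZMod.algebra K p
    have := essFiniteType_of_field_fg (ZMod p) K
    have := finiteDimensional_algebraicClosure (ZMod p) K
    have : Finite (algebraicClosure (ZMod p) K) := Module.finite_of_finite (ZMod p)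
    exact finite_setOf_isOfFinOrder_of_algebraicClosure (ZMod p) K (Set.toFinite _)

theorem finite_torsion_units (K : Type*) [Field K] [Field.FG K] :
    Finite (CommGroup.torsion Kˣ) :=
  ((finite_setOf_isOfFinOrder K).preimage Units.val_injective.injOn).subset
    (fun u hu ↦ (Units.isOfFinOrder_val (u := u)).2 hu) |>.to_subtype

theorem natCard_monoidHom_le_of_forall_pow_eq_one {M A : Type*} [Group M] [IsCyclic M] [Group A]
    [IsCyclic A] [Finite A] {w : ℕ} (hw : 0 < w) {P : (M →* A) → Prop}
    (hP : ∀ f, P f → ∀ x, f x ^ w = 1) : Nat.card {f // P f} ≤ w := by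
  obtain ⟨g, hg⟩ := IsCyclic.exists_generator (α := M)
  let evalGen (f : {f // P f}) : {a : A // a ^ w = 1} := ⟨f.1 g, hP f.1 f.2 g⟩
  have evalGen_injective : Function.Injective evalGen := fun f₁ f₂ h ↦
    Subtype.ext <| MonoidHom.eq_of_eqOn_dense
      ((Subgroup.zpowers_eq_closure g).symm.trans ((Subgroup.eq_top_iff' _).2 hg))
      (Set.eqOn_singleton.2 (congrArg Subtype.val h))
  calc Nat.card {f // P f} ≤ Nat.card {a : A // a ^ w = 1} :=
        Nat.card_le_card_of_injective evalGen evalGen_injective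
    _ ≤ w := by
        classical
        have := Fintype.ofFinite A
        rw [Nat.card_eq_fintype_card, Fintype.card_subtype]
        exact IsCyclic.card_pow_eq_one_le hw

theorem map_eq_self_of_orderOf_dvd_orderOf_map {M G : Type*} [Group M] [IsCyclic M] [Group G]
    {σ : M →* M} {f : M →* G} (hf : ∀ x, f (σ x) = f x) {x y : M}
    (hxy : orderOf x ∣ orderOf (f y)) : σ x = x := by
  obtain ⟨a, ha⟩ := σ.map_cyclic
  have hfy : f y ^ (a - 1) = 1 := by
    rw [zpow_sub_one, ← map_zpow, ← ha, hf, mul_inv_cancel]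
  have hx : x ^ (a - 1) = 1 := orderOf_dvd_iff_zpow_eq_one.1 <|
    (Int.natCast_dvd_natCast.2 hxy).trans (orderOf_dvd_iff_zpow_eq_one.2 hfy)
  rw [ha, ← mul_inv_eq_one, ← zpow_sub_one, hx]

section Galois

variable {K L : Type*} [Field K] [Field L] [Algebra K L] [IsGalois K L] {m : ℕ} [NeZero m]
  {G : Type*} [Group G] {f : rootsOfUnity m L →* G}

theorem exists_isPrimitiveRoot_orderOf_of_equivariant
    (hf : ∀ (σ : L ≃ₐ[K] L) (ζ : rootsOfUnity m L), f (restrictRootsOfUnity σ m ζ) = f ζ)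
    (ζ : rootsOfUnity m L) : ∃ z : K, IsPrimitiveRoot z (orderOf (f ζ)) := by
  obtain ⟨c, hc⟩ := orderOf_map_dvd f ζ
  have hprim : IsPrimitiveRoot (ζ ^ c) (orderOf (f ζ)) :=
    (IsPrimitiveRoot.orderOf ζ).pow (orderOf_pos ζ) (by rw [hc, mul_comm])
  generalize ζ ^ c = η at hprim
  have hfix (σ : L ≃ₐ[K] L) : σ (η : Lˣ) = (η : Lˣ) := by
    rw [← restrictRootsOfUnity_coe_apply,
      map_eq_self_of_orderOf_dvd_orderOf_map (hf σ) hprim.eq_orderOf.symm.dvd]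
  obtain ⟨z, hz⟩ := (InfiniteGalois.mem_range_algebraMap_iff_fixed _).2 hfix
  refine ⟨z, .of_map_of_injective (f := algebraMap K L) ?_ (algebraMap K L).injective⟩
  rwa [hz, IsPrimitiveRoot.coe_units_iff, IsPrimitiveRoot.coe_submonoidClass_iff]

theorem pow_natCard_torsion_units_eq_one_of_equivariant
    (hf : ∀ (σ : L ≃ₐ[K] L) (ζ : rootsOfUnity m L), f (restrictRootsOfUnity σ m ζ) = f ζ)
    (ζ : rootsOfUnity m L) : f ζ ^ Nat.card (CommGroup.torsion Kˣ) = 1 := by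
  have hpos : 0 < orderOf (f ζ) := (f.isOfFinOrder (isOfFinOrder_of_finite ζ)).orderOf_pos
  obtain ⟨z, hz⟩ := exists_isPrimitiveRoot_orderOf_of_equivariant hf ζ
  obtain ⟨u, rfl⟩ := hz.isUnit hpos.ne'
  replace hz : IsPrimitiveRoot u (orderOf (f ζ)) := IsPrimitiveRoot.coe_units_iff.1 hz
  have hu : u ∈ CommGroup.torsion Kˣ := isOfFinOrder_iff_pow_eq_one.2 ⟨_, hpos, hz.pow_eq_one⟩
  rw [← orderOf_dvd_iff_pow_eq_one, hz.eq_orderOf]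
  exact Subgroup.orderOf_dvd_natCard _ hu

variable (K L m) in
theorem natCard_equivariant_hom_rootsOfUnity_le [Finite (CommGroup.torsion Kˣ)]
    (A : Type*) [Group A] [IsCyclic A] [Finite A] :
    Nat.card {f : rootsOfUnity m L →* A //
      ∀ (σ : L ≃ₐ[K] L) (ζ : rootsOfUnity m L), f (restrictRootsOfUnity σ m ζ) = f ζ} ≤
      Nat.card (CommGroup.torsion Kˣ) :=
  natCard_monoidHom_le_of_forall_pow_eq_one Nat.card_pos fun _ ↦
    pow_natCard_torsion_units_eq_one_of_equivariant

end Galois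

theorem card_equivariant_hom_rootsOfUnity_bounded_general (K : Type*) [Field K] [Field.FG K] :
    ∃ C : ℕ, ∀ (L : Type*) [Field L] [Algebra K L] [IsGalois K L]
      (A : Type*) [Group A] [IsCyclic A] [Finite A] (m : ℕ) [NeZero m],
      Nat.card {f : rootsOfUnity m L →* A //
        ∀ (σ : L ≃ₐ[K] L) (ζ : rootsOfUnity m L), f (restrictRootsOfUnity σ m ζ) = f ζ} ≤ C :=
  have := finite_torsion_units K
  ⟨_, fun L _ _ _ A _ _ _ m _ ↦ natCard_equivariant_hom_rootsOfUnity_le K L m A⟩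

/-- Let `K` be a field of characteristic `p ≥ 0` that is finitely generated
over its prime subfield, and let `ℓ ≠ p` be a prime.  Then the cardinalities of the groups
`Hom_{G_K}(μ_{ℓ^n}, ℤ/ℓ^n ℤ)` of Galois-equivariant homomorphisms from the `ℓ^n`-th roots of
unity (in a separable closure of `K`) to `ℤ/ℓ^n ℤ` are bounded independently of `n`. -/
theorem card_equivariant_hom_rootsOfUnity_bounded
    (K : Type*) [Field K] (hfg : ∃ S : Finset K, Subfield.closure (S : Set K) = ⊤)
    (p : ℕ) [CharP K p] (ℓ : ℕ) (hℓ : ℓ.Prime) (hℓp : ℓ ≠ p) :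
    ∃ C : ℕ, ∀ n : ℕ, 1 ≤ n →
      Nat.card {f : rootsOfUnity (ℓ ^ n) (SeparableClosure K) →*
          Multiplicative (ZMod (ℓ ^ n)) //
        ∀ (σ : SeparableClosure K ≃ₐ[K] SeparableClosure K)
          (ζ : rootsOfUnity (ℓ ^ n) (SeparableClosure K)),
          f (restrictRootsOfUnity σ (ℓ ^ n) ζ) = f ζ} ≤ C := by
  have : Field.FG K := ⟨hfg⟩
  have : NeZero ℓ := ⟨hℓ.ne_zero⟩
  obtain ⟨C, hC⟩ := card_equivariant_hom_rootsOfUnity_bounded_general K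
  exact ⟨C, fun n _ ↦ hC (SeparableClosure K) (Multiplicative (ZMod (ℓ ^ n))) (ℓ ^ n)⟩
end

section
/- Let m be a positive integer, let M be a finite abelian group whose exponent divides m, and let g be an automorphism of M. Then the group of homomorphisms f : M → ℤ/mℤ satisfying f ∘ g = f has the same (finite) cardinality as the fixed-point subgroup M^g = {x ∈ M : g(x) = x}. -/
/-!
A homomorphism `f` is `g`-invariant exactly when it kills the range of `g - 1`, so by duality for
finite abelian groups the number of invariant homomorphisms is the index of that range. For an
endomorphism of a finite group, the index of the range is the order of the kernel, and the kernel
of `g - 1` is the group of fixed points.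
-/

theorem hasEnoughRootsOfUnity_multiplicative_zmod (m : ℕ) :
    HasEnoughRootsOfUnity (Multiplicative (ZMod m)) m where
  prim := by
    have hprim := IsPrimitiveRoot.orderOf (Multiplicative.ofAdd (1 : ZMod m))
    rw [orderOf_ofAdd_eq_addOrderOf, ZMod.addOrderOf_one] at hprim
    exact ⟨_, hprim⟩
  cyc :=
    have : IsCyclic (Multiplicative (ZMod m))ˣ := isCyclic_of_surjective toUnits toUnits.surjective
    inferInstance

section Duality

variable {m : ℕ} [NeZero m] {A : Type*} [AddCommGroup A] [Finite A]

theorem card_addMonoidHom_zmod (hA : AddMonoid.exponent A ∣ m) :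
    Nat.card (A →+ ZMod m) = Nat.card A := by
  have := hasEnoughRootsOfUnity_multiplicative_zmod m
  have : HasEnoughRootsOfUnity (Multiplicative (ZMod m)) (Monoid.exponent (Multiplicative A)) :=
    .of_dvd _ (n := m) (by rwa [Monoid.exponent_multiplicative])
  calc Nat.card (A →+ ZMod m)
      = Nat.card (Multiplicative A →* Multiplicative (ZMod m)) :=
        Nat.card_congr AddMonoidHom.toMultiplicative
    _ = Nat.card (Multiplicative A →* (Multiplicative (ZMod m))ˣ) :=
        Nat.card_congr toUnits.monoidHomCongrRightEquiv
    _ = Nat.card (Multiplicative A) :=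
        CommGroup.card_monoidHom_of_hasEnoughRootsOfUnity _ _
    _ = Nat.card A := Nat.card_congr Multiplicative.toAdd

theorem card_addMonoidHom_zmod_le_ker (hA : AddMonoid.exponent A ∣ m) (H : AddSubgroup A) :
    Nat.card {f : A →+ ZMod m // H ≤ f.ker} = H.index :=
  calc Nat.card {f : A →+ ZMod m // H ≤ f.ker}
      = Nat.card (AddMonoidHom.domRestrictHom H (ZMod m)).ker :=
        Nat.card_congr (Equiv.subtypeEquivRight fun _ ↦ AddMonoidHom.domRestrict_eq_zero_iff.symm)
    _ = Nat.card (A ⧸ H →+ ZMod m) :=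
        Nat.card_congr (AddMonoidHom.domRestrictHomKerEquiv (ZMod m) H).toEquiv
    _ = H.index := card_addMonoidHom_zmod ((AddGroup.exponent_quotient_dvd H).trans hA)

end Duality

theorem comp_eq_self_iff_range_sub_id_le_ker {A B : Type*} [AddCommGroup A] [AddGroup B]
    (f : A →+ B) (g : A →+ A) :
    f.comp g = f ↔ (g - AddMonoidHom.id A).range ≤ f.ker := by
  simp [DFunLike.ext_iff, SetLike.le_def, AddMonoidHom.mem_ker, sub_eq_zero]

theorem card_invariant_hom_eq_card_fixed_points_general
    (m : ℕ) (hm : 0 < m) (M : Type*) [AddCommGroup M] [Finite M]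
    (hexp : ∀ x : M, m • x = 0) (g : M →+ M) :
    Nat.card {f : M →+ ZMod m // f.comp g = f} = Nat.card {x : M // g x = x} := by
  have : NeZero m := ⟨hm.ne'⟩
  let φ := g - AddMonoidHom.id M
  calc Nat.card {f : M →+ ZMod m // f.comp g = f}
      = Nat.card {f : M →+ ZMod m // φ.range ≤ f.ker} :=
        Nat.card_congr (Equiv.subtypeEquivRight fun f ↦ comp_eq_self_iff_range_sub_id_le_ker f g)
    _ = φ.range.index :=
        card_addMonoidHom_zmod_le_ker (AddMonoid.exponent_dvd_of_forall_nsmul_eq_zero hexp) _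
    _ = Nat.card φ.ker := AddSubgroup.index_range
    _ = Nat.card {x : M // g x = x} :=
        Nat.card_congr (Equiv.subtypeEquivRight fun _ ↦ sub_eq_zero)

/-- Let `m` be a positive integer, `M` a finite abelian group of exponent
dividing `m`, and `g` an automorphism of `M`.  Then the group of homomorphisms
`f : M → ℤ/mℤ` with `f ∘ g = f` has the same cardinality as the fixed-point subgroup
`M^g = {x ∈ M : g x = x}`. -/
theorem card_invariant_hom_eq_card_fixed_points
    (m : ℕ) (hm : 0 < m) (M : Type*) [AddCommGroup M] [Finite M]
    (hexp : ∀ x : M, m • x = 0) (g : M ≃+ M) :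
    Nat.card {f : M →+ ZMod m // f.comp g.toAddMonoidHom = f} =
      Nat.card {x : M // g x = x} :=
  card_invariant_hom_eq_card_fixed_points_general m hm M hexp g.toAddMonoidHom
end

section
/- Let G be a group acting by group automorphisms on abelian groups M and N, and let f : M → N be a G-equivariant group homomorphism. Suppose the kernel of f is killed by a positive integer a (i.e. a·x = 0 for all x ∈ ker f) and the cokernel of f is killed by a positive integer b (i.e. b·N ⊆ f(M)). Then the induced map on fixed points M^G → N^G has kernel killed by a and cokernel killed by a·b (i.e. a·b·N^G is contained in the image of M^G). -/
section

variable {G R M N : Type*} [AddGroup M] [AddGroup N]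

theorem smul_eq_smul_of_map_eq [DistribSMul R M] (f : M →+ N) {a : R}
    (hker : ∀ x : M, f x = 0 → a • x = 0) {x y : M} (hxy : f x = f y) :
    a • x = a • y := by
  have hsub : f (x - y) = 0 := by rw [map_sub, hxy, sub_self]
  rw [← sub_eq_zero, ← smul_sub, hker _ hsub]

theorem smul_smul_eq_smul_of_smul_map_eq [DistribSMul R M] [SMul G M] [SMul G N]
    [SMulCommClass G R M] (f : M →+ N) {a : R} (hker : ∀ x : M, f x = 0 → a • x = 0)
    {σ : G} {x : M} (hequiv : f (σ • x) = σ • f x) (hfix : σ • f x = f x) :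
    σ • a • x = a • x :=
  (smul_comm σ a x).trans (smul_eq_smul_of_map_eq f hker (hequiv.trans hfix))

-- A lift `x` of `b • y` is unique up to `ker f`, so `a • x` depends only on `b • y` and is
-- fixed along with it.
theorem exists_fixed_map_eq_mul_smul [Monoid R] [DistribMulAction R M] [DistribMulAction R N]
    [SMul G M] [SMul G N] [SMulCommClass G R M] [SMulCommClass G R N]
    (f : M →+[R] N) (hequiv : ∀ (σ : G) (x : M), f (σ • x) = σ • f x) {a b : R}
    (hker : ∀ x : M, f x = 0 → a • x = 0) {y : N} (hlift : ∃ x : M, f x = b • y)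
    (hy : ∀ σ : G, σ • y = y) :
    ∃ x : M, (∀ σ : G, σ • x = x) ∧ f x = (a * b) • y := by
  obtain ⟨x, hx⟩ := hlift
  have hfix (σ : G) : σ • f x = f x := by rw [hx, smul_comm, hy]
  refine ⟨a • x, fun σ ↦ ?_, ?_⟩
  · exact smul_smul_eq_smul_of_smul_map_eq (f : M →+ N) hker (hequiv σ x) (hfix σ)
  · rw [map_smul, hx, mul_smul]

theorem fixed_points_kernel_cokernel_killed_general [Monoid R] [DistribMulAction R M]
    [DistribMulAction R N] [SMul G M] [SMul G N] [SMulCommClass G R M] [SMulCommClass G R N]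
    (f : M →+[R] N) (hequiv : ∀ (σ : G) (x : M), f (σ • x) = σ • f x) (a b : R)
    (hker : ∀ x : M, f x = 0 → a • x = 0) (hcoker : ∀ y : N, ∃ x : M, f x = b • y) :
    (∀ x : M, (∀ σ : G, σ • x = x) → f x = 0 → a • x = 0) ∧
    (∀ y : N, (∀ σ : G, σ • y = y) →
      ∃ x : M, (∀ σ : G, σ • x = x) ∧ f x = (a * b) • y) :=
  ⟨fun x _ ↦ hker x, fun y ↦ exists_fixed_map_eq_mul_smul f hequiv hker (hcoker y)⟩

end

/-- Let `G` act by group automorphisms on abelian groups `M` and `N`, and let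
`f : M → N` be a `G`-equivariant group homomorphism.  If `ker f` is killed by `a > 0` and
`coker f` is killed by `b > 0`, then the induced map on fixed points `M^G → N^G` has kernel
killed by `a` and cokernel killed by `a·b`. -/
theorem fixed_points_kernel_cokernel_killed
    (G : Type*) [Group G] (M N : Type*) [AddCommGroup M] [AddCommGroup N]
    [DistribMulAction G M] [DistribMulAction G N]
    (f : M →+ N) (hequiv : ∀ (σ : G) (x : M), f (σ • x) = σ • f x)
    (a b : ℕ) (ha : 0 < a) (hb : 0 < b)
    (hker : ∀ x : M, f x = 0 → a • x = 0)
    (hcoker : ∀ y : N, ∃ x : M, f x = b • y) :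
    (∀ x : M, (∀ σ : G, σ • x = x) → f x = 0 → a • x = 0) ∧
    (∀ y : N, (∀ σ : G, σ • y = y) →
      ∃ x : M, (∀ σ : G, σ • x = x) ∧ f x = (a * b) • y) :=
  fixed_points_kernel_cokernel_killed_general { f with map_smul' := map_nsmul f } hequiv a b
    hker hcoker
end
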